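/- arXiv:0907.4894 — 2 statements merged into one kernel-verified Lean document; each statement's English description precedes it below -/
import Mathlib

section
/- For every complex number s with Re(s) > 1, ∑_{n=1}^∞ b₄(n)/n^s = (1 + 2^{-2s} + 2·2^{-3s} + 4·2^{-4s}) · ∏_{p prime, p ≡ 3 (mod 4)} (1 + p^{-s}) · ∏_{p prime, p ≡ 1 (mod 4)} (1 + 3·p^{-s}). -/
/-- `b₄ n` is the number of primitive Dirichlet characters `χ` modulo `n` with values in `ℂ`
satisfying `χ ^ 4 = 1`. -/
noncomputable def b₄ (n : ℕ) : ℕ :=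
  Nat.card {χ : DirichletCharacter ℂ n // χ.IsPrimitive ∧ χ ^ 4 = 1}

/-!
Sorting the characters modulo `n` with `χ ^ k = 1` by conductor shows that the number of primitive
ones, convolved with `ζ`, is the number of `k`-torsion elements of `(ℤ/n)ˣ`. The latter is
multiplicative by the Chinese remainder theorem, so the former is too, by Möbius inversion. A
character with `χ ^ k = 1` kills `k`-th powers, and for large `e` the kernel of
`(ℤ/p^e)ˣ → (ℤ/p^(e-1))ˣ` consists of `k`-th powers, so that no such `χ` is primitive modulo `p^e`.
For `k = 4` this leaves `e ≤ 1` for odd `p`, with `gcd (p - 1) 4 - 1` characters modulo `p`, and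
`e ≤ 4` for `p = 2`; the Euler product then has the stated finite factors.
-/

open ArithmeticFunction
open scoped ArithmeticFunction.zeta ArithmeticFunction.Moebius

section EulerProduct

lemma summable_of_summable_prime_pow {f : ℕ → ℝ} (hf : ∀ n, 0 ≤ f n) (h₀ : f 0 = 0)
    (h₁ : f 1 = 1) (hmul : ∀ {m n : ℕ}, m.Coprime n → f (m * n) = f m * f n)
    (hsum : Summable fun q : Nat.Primes × ℕ => f (q.1 ^ (q.2 + 1))) : Summable f := by
  let tail (p : ℕ) : ℝ := ∑' k : ℕ, f (p ^ (k + 1))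
  have hlocal {p : ℕ} (hp : p.Prime) : Summable fun k => f (p ^ k) :=
    (summable_nat_add_iff 1).1 (hsum.prod_factor ⟨p, hp⟩)
  have hfactor {p : ℕ} (hp : p.Prime) : ∑' k, f (p ^ k) ≤ Real.exp (tail p) := by
    rw [(hlocal hp).tsum_eq_zero_add, pow_zero, h₁, add_comm]
    exact Real.add_one_le_exp _
  have htail : Summable fun p : {p : ℕ // p.Prime} => tail p := hsum.prod
  refine summable_of_sum_le hf (c := Real.exp (∑' p : {p : ℕ // p.Prime}, tail p)) fun u => ?_
  obtain ⟨N, hN⟩ := u.exists_nat_subset_range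
  have hprod := (EulerProduct.summable_and_hasSum_smoothNumbers_prod_primesBelow_tsum
    h₁ hmul (fun hp => (hlocal hp).norm) N).2
  have hsmooth : ∀ n ∈ u, N.smoothNumbers.indicator f n = f n := fun n hn => by
    rcases n.eq_zero_or_pos with rfl | hpos
    · simp [h₀]
    · exact Set.indicator_of_mem
        (Nat.mem_smoothNumbers_of_lt hpos (Finset.mem_range.1 (hN hn))) f
  calc ∑ n ∈ u, f n = ∑ n ∈ u, N.smoothNumbers.indicator f n := (Finset.sum_congr rfl hsmooth).symm
    _ ≤ ∏ p ∈ N.primesBelow, ∑' k, f (p ^ k) :=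
      sum_le_hasSum u (fun n _ => Set.indicator_nonneg (fun n _ => hf n) n)
        (hasSum_subtype_iff_indicator.1 hprod)
    _ ≤ ∏ p ∈ N.primesBelow, Real.exp (tail p) :=
      Finset.prod_le_prod (fun p _ => tsum_nonneg fun k => hf _)
        fun p hp => hfactor (Nat.prime_of_mem_primesBelow hp)
    _ = Real.exp (∑ p ∈ N.primesBelow.subtype Nat.Prime, tail p) := by
      rw [← Real.exp_sum, Finset.sum_subtype_of_mem tail fun _ => Nat.prime_of_mem_primesBelow]
    _ ≤ Real.exp (∑' p : {p : ℕ // p.Prime}, tail p) :=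
      Real.exp_le_exp.2 (htail.sum_le_tsum _ fun p _ => tsum_nonneg fun k => hf _)

lemma LSeries_term_mul_of_coprime {f : ArithmeticFunction ℂ} (hf : f.IsMultiplicative) (s : ℂ)
    {m n : ℕ} (h : m.Coprime n) :
    LSeries.term f s (m * n) = LSeries.term f s m * LSeries.term f s n := by
  rw [LSeries.term_def₀ f.map_zero, LSeries.term_def₀ f.map_zero, LSeries.term_def₀ f.map_zero,
    hf.map_mul_of_coprime h, Nat.cast_mul, Complex.natCast_mul_natCast_cpow, mul_mul_mul_comm]

lemma LSeries_term_prime_pow {p : ℕ} (hp : p.Prime) (f : ℕ → ℂ) (s : ℂ) (e : ℕ) :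
    LSeries.term f s (p ^ e) = f (p ^ e) * (p : ℂ) ^ (-(e * s)) := by
  rw [LSeries.term_of_ne_zero (pow_ne_zero _ hp.ne_zero), Nat.cast_pow, Complex.cpow_neg,
    Complex.natCast_cpow_natCast_mul, div_eq_mul_inv]

lemma tsum_LSeries_term_prime_pow_eq_sum {p : ℕ} (hp : p.Prime) {f : ℕ → ℂ} {N : ℕ}
    (hf : ∀ k, f (p ^ (k + N)) = 0) (s : ℂ) :
    ∑' e, LSeries.term f s (p ^ e) =
      ∑ e ∈ Finset.range N, f (p ^ e) * (p : ℂ) ^ (-(e * s)) := by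
  simp_rw [LSeries_term_prime_pow hp]
  refine tsum_eq_sum fun e he => ?_
  obtain ⟨k, rfl⟩ := Nat.exists_eq_add_of_le' (not_lt.1 (Finset.mem_range.not.1 he))
  rw [hf, zero_mul]

variable {f : ArithmeticFunction ℂ} {s : ℂ}

lemma LSeriesSummable_of_norm_prime_pow_le (hf : f.IsMultiplicative) {C : ℝ}
    (hC : ∀ p k : ℕ, p.Prime → ‖f (p ^ k)‖ ≤ C) (hs : 1 < s.re) : LSeriesSummable f s := by
  refine Summable.of_norm (summable_of_summable_prime_pow (fun _ => norm_nonneg _) (by simp)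
    (by simp [hf.map_one])
    (fun h => by rw [LSeries_term_mul_of_coprime hf s h, norm_mul]) ?_)
  have hinj : Function.Injective fun q : Nat.Primes × ℕ => (q.1 : ℕ) ^ (q.2 + 1) :=
    Subtype.val_injective.comp Nat.Primes.prodNatEquiv.injective
  have hpow : Summable fun n : ℕ => C * ‖(1 / (n : ℂ) ^ s)‖ :=
    (Complex.summable_one_div_nat_cpow.2 hs).norm.mul_left C
  refine (hpow.comp_injective hinj).of_nonneg_of_le (fun _ => norm_nonneg _) fun ⟨p, k⟩ => ?_
  rw [LSeries.term_of_ne_zero (pow_ne_zero _ p.2.ne_zero), div_eq_mul_one_div, norm_mul]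
  exact mul_le_mul_of_nonneg_right (hC p (k + 1) p.2) (norm_nonneg _)

lemma LSeries_hasProd_of_isMultiplicative (hf : f.IsMultiplicative) (h : LSeriesSummable f s) :
    HasProd (fun p : Nat.Primes => ∑' e, LSeries.term f s (p ^ e)) (LSeries f s) :=
  EulerProduct.eulerProduct_hasProd (by simp [hf.map_one])
    (LSeries_term_mul_of_coprime hf s) h.norm (LSeries.term_zero ..)

end EulerProduct

lemma isMultiplicative_of_mul_zeta {R : Type*} [CommRing R] {f : ArithmeticFunction R}
    (h : (f * (ζ : ArithmeticFunction R)).IsMultiplicative) : f.IsMultiplicative := by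
  have := h.mul (isMultiplicative_moebius.intCast (R := R))
  rwa [mul_assoc, coe_zeta_mul_coe_moebius, mul_one] at this

lemma card_rootsOfUnity_prod (k : ℕ) (M N : Type*) [CommMonoid M] [CommMonoid N] :
    Nat.card (rootsOfUnity k (M × N)) =
      Nat.card (rootsOfUnity k M) * Nat.card (rootsOfUnity k N) := by
  rw [← Nat.card_prod]
  refine Nat.card_congr ((MulEquiv.prodUnits.toEquiv.subtypeEquiv fun u => ?_).trans
    Equiv.subtypeProdEquivProd)
  simp [Prod.ext_iff, Units.ext_iff, MulEquiv.prodUnits]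

lemma card_rootsOfUnity_zmod_mul (k : ℕ) {m n : ℕ} (h : m.Coprime n) :
    Nat.card (rootsOfUnity k (ZMod (m * n))) =
      Nat.card (rootsOfUnity k (ZMod m)) * Nat.card (rootsOfUnity k (ZMod n)) := by
  rw [← card_rootsOfUnity_prod]
  exact Nat.card_congr ((ZMod.chineseRemainder h).toMulEquiv.restrictRootsOfUnity k).toEquiv

lemma card_rootsOfUnity_zmod_of_isCyclic (k n : ℕ) [NeZero n] [IsCyclic (ZMod n)ˣ] :
    Nat.card (rootsOfUnity k (ZMod n)) = n.totient.gcd k := by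
  rw [← ZMod.card_units_eq_totient, ← Nat.card_eq_fintype_card]
  exact IsCyclic.card_powMonoidHom_ker (ZMod n)ˣ k

lemma card_rootsOfUnity_zmod_of_forall_pow_eq_one {k n : ℕ} [NeZero n]
    (h : ∀ u : (ZMod n)ˣ, u ^ k = 1) : Nat.card (rootsOfUnity k (ZMod n)) = n.totient := by
  rw [← ZMod.card_units_eq_totient, ← Nat.card_eq_fintype_card]
  exact Nat.card_congr (Equiv.subtypeUnivEquiv h)

lemma dvd_val_sub_one_of_mem_ker_unitsMap {d n : ℕ} (h : d ∣ n) {u : (ZMod n)ˣ}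
    (hu : u ∈ (ZMod.unitsMap h).ker) : (d : ZMod n) ∣ (u : ZMod n) - 1 := by
  have hcast : ZMod.castHom h (ZMod d) (u - 1) = 0 := by
    rw [map_sub, map_one, sub_eq_zero]
    exact congrArg Units.val (MonoidHom.mem_ker.1 hu)
  obtain ⟨z, hz⟩ := ZMod.intCast_surjective (u - 1 : ZMod n)
  rw [← hz, map_intCast, ZMod.intCast_zmod_eq_zero_iff_dvd] at hcast
  rw [← hz, ← Int.cast_natCast]
  exact Int.cast_dvd_cast _ _ hcast

lemma factorsThrough_of_pow_eq_one {d n k : ℕ} [NeZero n] (hd : d ∣ n)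
    (hker : ∀ u ∈ (ZMod.unitsMap hd).ker, ∃ v : (ZMod n)ˣ, v ^ k = u) {R : Type*} [CommRing R]
    {χ : DirichletCharacter R n} (hχ : χ ^ k = 1) : χ.FactorsThrough d := by
  rw [DirichletCharacter.factorsThrough_iff_ker_unitsMap hd]
  intro u hu
  obtain ⟨v, rfl⟩ := hker u hu
  rw [MonoidHom.mem_ker, Units.ext_iff, MulChar.coe_toUnitHom, Units.val_pow_eq_pow_val, map_pow,
    ← MulChar.pow_apply_coe, hχ, MulChar.one_apply_coe, Units.val_one]

/-- Sorting the characters modulo `n` of order dividing `k` by conductor: each one is induced by a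
unique primitive character, whose modulus is a divisor of `n`. -/
noncomputable def sigmaPrimitiveEquiv (R : Type*) [CommRing R] (k n : ℕ) [NeZero n] :
    (Σ d : n.divisors, {χ : DirichletCharacter R d // χ.IsPrimitive ∧ χ ^ k = 1}) ≃
      {χ : DirichletCharacter R n // χ ^ k = 1} :=
  Equiv.ofBijective (fun x => ⟨DirichletCharacter.changeLevel
    (Nat.dvd_of_mem_divisors x.1.2) x.2.1, by rw [← map_pow, x.2.2.2, map_one]⟩) <| by
  constructor
  · rintro ⟨⟨d, hd⟩, χ, hχ, hχk⟩ ⟨⟨e, he⟩, ψ, hψ, hψk⟩ h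
    replace h := congrArg Subtype.val h
    obtain rfl : d = e := by
      have hcond := congrArg DirichletCharacter.conductor h
      rwa [DirichletCharacter.conductor_changeLevel, DirichletCharacter.conductor_changeLevel,
        hχ, hψ] at hcond
    obtain rfl := DirichletCharacter.changeLevel_injective _ h
    rfl
  · rintro ⟨χ, hχ⟩
    refine ⟨⟨⟨χ.conductor, Nat.mem_divisors.2 ⟨χ.conductor_dvd_level, NeZero.ne n⟩⟩,
      χ.primitiveCharacter, χ.primitiveCharacter_isPrimitive, ?_⟩,
      Subtype.ext χ.changeLevel_primitiveCharacter⟩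
    apply DirichletCharacter.changeLevel_injective χ.conductor_dvd_level
    rw [map_pow, χ.changeLevel_primitiveCharacter, hχ, map_one]

lemma card_dirichletCharacter_pow_eq_one (R : Type*) [CommRing R] (k n : ℕ) [NeZero n]
    [HasEnoughRootsOfUnity R (Monoid.exponent (ZMod n)ˣ)] :
    Nat.card {χ : DirichletCharacter R n // χ ^ k = 1} = Nat.card (rootsOfUnity k (ZMod n)) := by
  have e := (MulChar.mulEquiv_units (ZMod n) R).some
  exact Nat.card_congr (e.toEquiv.subtypeEquiv fun χ => by simp [← map_pow])

section KerUnitsMap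

variable {p j : ℕ}

-- `j + 2 ≤ j * p` encodes `1 ≤ j` for odd `p` and `2 ≤ j` for `p = 2`: with it, raising
-- `1 + p ^ j * c` to the power `p ^ m` gives `1 + p ^ (m + j) * c` up to higher powers of `p`.
lemma exists_pow_eq_of_mem_ker_unitsMap (hp : p.Prime) (hj : j + 2 ≤ j * p) (m : ℕ)
    {u : (ZMod (p ^ (m + j + 1)))ˣ}
    (hu : u ∈ (ZMod.unitsMap (pow_dvd_pow p (m + j).le_succ)).ker) :
    ∃ v : (ZMod (p ^ (m + j + 1)))ˣ, v ^ p ^ m = u := by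
  have hj₀ : j ≠ 0 := by rintro rfl; simp at hj
  have hp₀ : (p : ZMod (p ^ (m + j + 1))) ^ (m + j + 1) = 0 := by
    exact_mod_cast ZMod.natCast_self (p ^ (m + j + 1))
  obtain ⟨c, hc⟩ := dvd_val_sub_one_of_mem_ker_unitsMap _ hu
  obtain ⟨y, hy⟩ := ZMod.exists_one_add_mul_pow_prime_pow_eq (u := (p : ZMod (p ^ (m + j + 1))) ^ j)
    (v := p) hp (dvd_pow_self _ hj₀)
    (by rw [← pow_succ', ← pow_succ, ← pow_mul]; exact pow_dvd_pow _ hj) c m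
  have hpow : (1 + (p : ZMod (p ^ (m + j + 1))) ^ j * c) ^ p ^ m = u := by
    push_cast at hc
    linear_combination hy - hc + y * hp₀
  have hunit : IsUnit (1 + (p : ZMod (p ^ (m + j + 1))) ^ j * c) :=
    (isUnit_pow_iff (pow_ne_zero m hp.ne_zero)).1 (hpow ▸ u.isUnit)
  exact ⟨hunit.unit, Units.ext hpow⟩

lemma pow_prime_eq_one_of_mem_ker_unitsMap (hp : p.Prime) {n : ℕ} (hn : n ≠ 0)
    {u : (ZMod (p ^ (n + 1)))ˣ} (hu : u ∈ (ZMod.unitsMap (pow_dvd_pow p n.le_succ)).ker) :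
    u ^ p = 1 := by
  have hp₀ : (p : ZMod (p ^ (n + 1))) ^ (n + 1) = 0 := by
    exact_mod_cast ZMod.natCast_self (p ^ (n + 1))
  have hdvd : n + 1 ≤ n * p := by nlinarith [hp.two_le, Nat.one_le_iff_ne_zero.2 hn]
  obtain ⟨c, hc⟩ := dvd_val_sub_one_of_mem_ker_unitsMap _ hu
  obtain ⟨y, hy⟩ := ZMod.exists_one_add_mul_pow_prime_eq (u := (p : ZMod (p ^ (n + 1))) ^ n)
    (v := 1) hp (one_dvd _)
    (by rw [mul_one, ← pow_succ', ← pow_mul]; exact pow_dvd_pow _ hdvd) c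
  have hval : (u : ZMod (p ^ (n + 1))) = 1 + p ^ n * c := by
    rw [← Nat.cast_pow, ← hc, add_sub_cancel]
  refine Units.ext ?_
  rw [Units.val_pow_eq_pow_val, hval, hy, Units.val_one]
  linear_combination (c + y) * hp₀

lemma exists_pow_eq_of_mem_ker_unitsMap_of_coprime (hp : p.Prime) (hj : j + 2 ≤ j * p)
    {m l : ℕ} (hl : p.Coprime l) {u : (ZMod (p ^ (m + j + 1)))ˣ}
    (hu : u ∈ (ZMod.unitsMap (pow_dvd_pow p (m + j).le_succ)).ker) :
    ∃ v : (ZMod (p ^ (m + j + 1)))ˣ, v ^ (p ^ m * l) = u := by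
  have hmj : m + j ≠ 0 := by rintro h; simp [(Nat.add_eq_zero_iff.1 h).2] at hj
  have horder : l.Coprime (orderOf u) := hl.symm.coprime_dvd_right
    (orderOf_dvd_of_pow_eq_one (pow_prime_eq_one_of_mem_ker_unitsMap hp hmj hu))
  obtain ⟨a, ha⟩ := exists_pow_eq_self_of_coprime horder
  obtain ⟨v, hv⟩ := exists_pow_eq_of_mem_ker_unitsMap hp hj m (pow_mem hu a)
  exact ⟨v, by rw [pow_mul, hv, ← pow_mul, mul_comm, pow_mul, ha]⟩

end KerUnitsMap

/-- `primitiveCount k n` is the number of primitive Dirichlet characters `χ` modulo `n` with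
`χ ^ k = 1`, so `b₄` is `primitiveCount 4` away from `0`. The value at `0`, which would count
characters of `ZMod 0 = ℤ`, is set to `0`. -/
noncomputable def primitiveCount (k : ℕ) : ArithmeticFunction ℕ where
  toFun n := if n = 0 then 0 else
    Nat.card {χ : DirichletCharacter ℂ n // χ.IsPrimitive ∧ χ ^ k = 1}
  map_zero' := if_pos rfl

lemma primitiveCount_apply (k : ℕ) {n : ℕ} (hn : n ≠ 0) : primitiveCount k n =
    Nat.card {χ : DirichletCharacter ℂ n // χ.IsPrimitive ∧ χ ^ k = 1} :=
  if_neg hn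

lemma sum_divisors_primitiveCount (k n : ℕ) [NeZero n] :
    ∑ d ∈ n.divisors, primitiveCount k d = Nat.card (rootsOfUnity k (ZMod n)) := by
  have (d : n.divisors) : NeZero (d : ℕ) := ⟨(Nat.pos_of_mem_divisors d.2).ne'⟩
  rw [← card_dirichletCharacter_pow_eq_one ℂ, ← Nat.card_congr (sigmaPrimitiveEquiv ℂ k n),
    Nat.card_sigma, ← Finset.sum_coe_sort]
  exact Finset.sum_congr rfl fun d _ => primitiveCount_apply k (NeZero.ne (d : ℕ))

lemma isMultiplicative_primitiveCount (k : ℕ) (R : Type*) [CommRing R] :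
    (primitiveCount k : ArithmeticFunction R).IsMultiplicative := by
  refine isMultiplicative_of_mul_zeta ?_
  have hcard {n : ℕ} (hn : n ≠ 0) :
      (primitiveCount k * ζ) n = Nat.card (rootsOfUnity k (ZMod n)) := by
    have : NeZero n := ⟨hn⟩
    rw [mul_zeta_apply, sum_divisors_primitiveCount]
  have hmul : (primitiveCount k * ζ).IsMultiplicative := by
    refine IsMultiplicative.iff_ne_zero.2 ⟨?_, fun hm hn h => ?_⟩
    · rw [hcard one_ne_zero, Nat.card_unique]
    · rw [hcard (mul_ne_zero hm hn), hcard hm, hcard hn, card_rootsOfUnity_zmod_mul k h]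
  simpa using hmul.natCast (R := R)

lemma primitiveCount_one (k : ℕ) : primitiveCount k 1 = 1 := by
  simpa only [Nat.divisors_one, Finset.sum_singleton, Nat.card_unique] using
    sum_divisors_primitiveCount k 1

lemma primitiveCount_prime_pow_succ_add {p : ℕ} (hp : p.Prime) (k e : ℕ) :
    primitiveCount k (p ^ (e + 1)) + Nat.card (rootsOfUnity k (ZMod (p ^ e))) =
      Nat.card (rootsOfUnity k (ZMod (p ^ (e + 1)))) := by
  have : NeZero p := ⟨hp.ne_zero⟩
  rw [← sum_divisors_primitiveCount, ← sum_divisors_primitiveCount, Nat.sum_divisors_prime_pow hp,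
    Nat.sum_divisors_prime_pow hp, Finset.sum_range_succ _ (e + 1), add_comm]

lemma primitiveCount_prime {p : ℕ} (hp : p.Prime) (k : ℕ) :
    primitiveCount k p = (p - 1).gcd k - 1 := by
  have : NeZero p := ⟨hp.ne_zero⟩
  have := ZMod.isCyclic_units_prime hp
  have h := sum_divisors_primitiveCount k p
  rw [hp.sum_divisors, primitiveCount_one, card_rootsOfUnity_zmod_of_isCyclic,
    Nat.totient_prime hp] at h
  exact Nat.eq_sub_of_add_eq h

lemma primitiveCount_prime_pow_eq_zero {p j m l : ℕ} (hp : p.Prime) (hl : p.Coprime l)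
    (hj : j + 2 ≤ j * p) : primitiveCount (p ^ m * l) (p ^ (m + j + 1)) = 0 := by
  have : NeZero p := ⟨hp.ne_zero⟩
  rw [primitiveCount_apply _ (NeZero.ne _), Nat.card_eq_zero]
  refine .inl ⟨fun ⟨χ, hprim, hχ⟩ => ?_⟩
  have hfac : χ.FactorsThrough (p ^ (m + j)) := factorsThrough_of_pow_eq_one _
    (fun u hu => exists_pow_eq_of_mem_ker_unitsMap_of_coprime hp hj hl hu) hχ
  have hle : χ.conductor ≤ p ^ (m + j) := Nat.sInf_le hfac
  rw [hprim] at hle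
  exact (Nat.pow_lt_pow_right hp.one_lt (Nat.lt_succ_self _)).not_ge hle

lemma primitiveCount_four_odd_prime_pow {p : ℕ} (hp : p.Prime) (hp2 : p ≠ 2) (e : ℕ) :
    primitiveCount 4 (p ^ (e + 2)) = 0 := by
  have hp3 : 3 ≤ p := hp.two_le.lt_of_ne' hp2
  have hcop : p.Coprime 4 := ((Nat.coprime_primes hp Nat.prime_two).2 hp2).pow_right 2
  simpa [add_assoc] using primitiveCount_prime_pow_eq_zero (m := 0) (j := e + 1) hp hcop
    (by nlinarith)

lemma primitiveCount_four_two_pow_add_five (e : ℕ) : primitiveCount 4 (2 ^ (e + 5)) = 0 := by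
  have := primitiveCount_prime_pow_eq_zero (m := 2) (j := e + 2) Nat.prime_two
    (Nat.coprime_one_right 2) (by lia)
  rwa [show 2 + (e + 2) + 1 = e + 5 by lia] at this

lemma primitiveCount_four_two_pow_succ {e : ℕ} (he : e < 4) :
    primitiveCount 4 (2 ^ (e + 1)) = (2 ^ (e + 1)).totient - (2 ^ e).totient := by
  have hexp {i : ℕ} (hi : i ≤ 4) (u : (ZMod (2 ^ i))ˣ) : u ^ 4 = 1 := by
    revert u; interval_cases i <;> decide
  rw [← card_rootsOfUnity_zmod_of_forall_pow_eq_one (hexp he.le),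
    ← card_rootsOfUnity_zmod_of_forall_pow_eq_one (hexp he)]
  exact Nat.eq_sub_of_add_eq (primitiveCount_prime_pow_succ_add Nat.prime_two 4 e)

lemma primitiveCount_four_prime_pow_le {p : ℕ} (hp : p.Prime) (e : ℕ) :
    primitiveCount 4 (p ^ e) ≤ 4 := by
  rcases eq_or_ne p 2 with rfl | hp2
  · match e with
    | 0 => simp [primitiveCount_one]
    | e + 5 => simp [primitiveCount_four_two_pow_add_five]
    | 1 | 2 | 3 | 4 => rw [primitiveCount_four_two_pow_succ (by simp)]; decide
  · match e with
    | 0 => simp [primitiveCount_one]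
    | 1 =>
      rw [pow_one, primitiveCount_prime hp]
      exact (Nat.sub_le _ _).trans (Nat.gcd_le_right _ four_pos)
    | e + 2 => simp [primitiveCount_four_odd_prime_pow hp hp2]

lemma tsum_LSeries_term_two_pow (s : ℂ) :
    ∑' e, LSeries.term (primitiveCount 4 : ArithmeticFunction ℂ) s (2 ^ e) =
      1 + (2 : ℂ) ^ (-(2 * s)) + 2 * (2 : ℂ) ^ (-(3 * s)) + 4 * (2 : ℂ) ^ (-(4 * s)) := by
  have h₁ : primitiveCount 4 2 = 0 := primitiveCount_prime Nat.prime_two 4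
  have h₂ : primitiveCount 4 (2 ^ 2) = 1 := primitiveCount_four_two_pow_succ (by simp)
  have h₃ : primitiveCount 4 (2 ^ 3) = 2 := primitiveCount_four_two_pow_succ (by simp)
  have h₄ : primitiveCount 4 (2 ^ 4) = 4 := primitiveCount_four_two_pow_succ (by simp)
  rw [tsum_LSeries_term_prime_pow_eq_sum Nat.prime_two (N := 5)
    fun k => by rw [natCoe_apply, primitiveCount_four_two_pow_add_five, Nat.cast_zero]]
  simp [Finset.sum_range_succ, -Nat.reducePow, primitiveCount_one, h₁, h₂, h₃, h₄]

lemma tsum_LSeries_term_odd_prime_pow {p : ℕ} (hp : p.Prime) (hp2 : p ≠ 2) (s : ℂ) :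
    ∑' e, LSeries.term (primitiveCount 4 : ArithmeticFunction ℂ) s (p ^ e) =
      1 + primitiveCount 4 p * (p : ℂ) ^ (-s) := by
  rw [tsum_LSeries_term_prime_pow_eq_sum hp (N := 2)
    fun k => by rw [natCoe_apply, primitiveCount_four_odd_prime_pow hp hp2, Nat.cast_zero]]
  simp [Finset.sum_range_succ, primitiveCount_one]

lemma primitiveCount_four_of_mod_four_eq_one {p : ℕ} (hp : p.Prime) (h : p % 4 = 1) :
    primitiveCount 4 p = 3 := by
  rw [primitiveCount_prime hp, Nat.gcd_eq_right (by lia)]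

lemma primitiveCount_four_of_mod_four_eq_three {p : ℕ} (hp : p.Prime) (h : p % 4 = 3) :
    primitiveCount 4 p = 1 := by
  rw [primitiveCount_prime hp, Nat.gcd_comm, Nat.gcd_rec, show (p - 1) % 4 = 2 by lia]
  rfl

lemma multipliable_one_add_mul_cpow {s : ℂ} (hs : 1 < s.re) (c : ℂ) (P : ℕ → Prop) :
    Multipliable fun p : {p : ℕ // P p} => 1 + c * (p : ℂ) ^ (-s) := by
  have h : Summable fun n : ℕ => ‖c * (n : ℂ) ^ (-s)‖ := by
    simp_rw [Complex.cpow_neg, ← one_div]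
    exact ((Complex.summable_one_div_nat_cpow.2 hs).mul_left c).norm
  exact multipliable_one_add_of_summable (h.comp_injective Subtype.val_injective)

lemma hasProd_tsum_LSeries_term_prime_pow {s : ℂ} (hs : 1 < s.re) {P : ℕ → Prop} {c : ℕ}
    (hP : ∀ p, P p → p.Prime ∧ p ≠ 2 ∧ primitiveCount 4 p = c) :
    HasProd (fun p : {p : ℕ // P p} =>
        ∑' e, LSeries.term (primitiveCount 4 : ArithmeticFunction ℂ) s (p ^ e))
      (∏' p : {p : ℕ // P p}, (1 + c * (p : ℂ) ^ (-s))) := by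
  refine (multipliable_one_add_mul_cpow hs c P).hasProd.congr_fun fun ⟨p, h⟩ => ?_
  obtain ⟨hp, hp2, hc⟩ := hP p h
  rw [tsum_LSeries_term_odd_prime_pow hp hp2, hc]

lemma hasProd_primes_of_mod_four {M : Type*} [CommMonoid M] [TopologicalSpace M] [ContinuousMul M]
    {F : ℕ → M} {a b : M} (h₃ : HasProd (fun p : {p : ℕ // p.Prime ∧ p % 4 = 3} => F p) a)
    (h₁ : HasProd (fun p : {p : ℕ // p.Prime ∧ p % 4 = 1} => F p) b) :
    HasProd (fun p : Nat.Primes => F p) (F 2 * a * b) := by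
  have h₂ : HasProd (F ∘ (↑) : ({2} : Set ℕ) → M) (F 2) := hasProd_unique _
  have hunion : {2} ∪ {p : ℕ | p.Prime ∧ p % 4 = 3} ∪ {p : ℕ | p.Prime ∧ p % 4 = 1} =
      {p : ℕ | p.Prime} := by
    ext p
    have := fun hp : p.Prime => hp.eq_two_or_odd
    have := Nat.prime_two
    simp only [Set.mem_union, Set.mem_singleton_iff, Set.mem_ofPred_eq]
    grind
  have hdisj : Disjoint ({2} ∪ {p : ℕ | p.Prime ∧ p % 4 = 3}) {p : ℕ | p.Prime ∧ p % 4 = 1} := by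
    rw [Set.disjoint_left]
    simp only [Set.mem_union, Set.mem_singleton_iff, Set.mem_ofPred_eq]
    lia
  have hdisj₂ : Disjoint {2} {p : ℕ | p.Prime ∧ p % 4 = 3} := by simp
  have h := (h₂.mul_disjoint hdisj₂ h₃).mul_disjoint hdisj h₁
  rwa [hunion] at h

theorem b₄_LSeries_eq (s : ℂ) (hs : 1 < s.re) :
    LSeries (fun n => (b₄ n : ℂ)) s =
      (1 + (2 : ℂ) ^ (-(2 * s)) + 2 * (2 : ℂ) ^ (-(3 * s)) + 4 * (2 : ℂ) ^ (-(4 * s))) *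
        (∏' p : {p : ℕ // p.Prime ∧ p % 4 = 3}, (1 + (p : ℂ) ^ (-s))) *
        (∏' p : {p : ℕ // p.Prime ∧ p % 4 = 1}, (1 + 3 * (p : ℂ) ^ (-s))) := by
  let f : ArithmeticFunction ℂ := primitiveCount 4
  have hf : f.IsMultiplicative := isMultiplicative_primitiveCount 4 ℂ
  have hsum : LSeriesSummable f s := LSeriesSummable_of_norm_prime_pow_le hf (C := 4)
    (fun p e hp => by simpa [f] using mod_cast primitiveCount_four_prime_pow_le hp e) hs
  have h₃ := hasProd_tsum_LSeries_term_prime_pow hs (P := fun p => p.Prime ∧ p % 4 = 3)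
    fun p h => ⟨h.1, by rintro rfl; simp at h, primitiveCount_four_of_mod_four_eq_three h.1 h.2⟩
  have h₁ := hasProd_tsum_LSeries_term_prime_pow hs (P := fun p => p.Prime ∧ p % 4 = 1)
    fun p h => ⟨h.1, by rintro rfl; simp at h, primitiveCount_four_of_mod_four_eq_one h.1 h.2⟩
  have hprod := hasProd_primes_of_mod_four (F := fun p => ∑' e, LSeries.term f s (p ^ e)) h₃ h₁
  rw [LSeries_congr (g := f) fun hn => by simp [f, b₄, primitiveCount_apply 4 hn],
    (LSeries_hasProd_of_isMultiplicative hf hsum).unique hprod, tsum_LSeries_term_two_pow]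
  simp only [Nat.cast_one, one_mul, Nat.cast_ofNat]
end

section
/- As real s → 1 from the right, (s - 1) · ∏_{p prime, p ≡ 1 (mod 8)} (1 - p^{-s})^{-4} converges to (2·ln(1 + √2)/π²) · ∏_{p prime, p ≡ 1 (mod 8)} (1 - p^{-2})^{-2}. -/
/-!
Multiply the `L`-series of the four characters modulo 8. At a prime `p ≡ 1 (mod 8)` all four
characters equal `1` and the Euler factor is `(1 - p⁻ˢ)⁻⁴`; at every other odd prime two of them
equal `1` and two equal `-1`, which leaves `(1 - p⁻²ˢ)⁻²`. So the product of the four `L`-series is,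
up to the square of a product that converges beyond `s = 1`, the Euler product in question, and its
pole at `s = 1` comes from the trivial character. For periodic coefficients `a`, `Γ(s) L(a, s)` is
the Mellin transform of `t ↦ ∑ a(n) e⁻ⁿᵗ`; at `s = 1` the substitution `x = e⁻ᵗ` turns it into
`∫₀¹ ∑ a(n + 1) xⁿ dx`, the integral of a rational function, which evaluates the other three
`L`-series.
-/

open Complex Filter MeasureTheory Set Topology

section AbelianTheorem

lemma norm_le_sum_range_of_periodic {E : Type*} [SeminormedAddGroup E] {N : ℕ} [NeZero N]
    {a : ℕ → E} (ha : Function.Periodic a N) (n : ℕ) : ‖a n‖ ≤ ∑ m ∈ Finset.range N, ‖a m‖ := by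
  rw [← ha.map_mod_nat]
  exact Finset.single_le_sum (f := fun m ↦ ‖a m‖) (fun _ _ ↦ norm_nonneg _)
    (Finset.mem_range.mpr (n.mod_lt (NeZero.pos N)))

lemma hasSum_periodic_mul_pow {𝕜 : Type*} [NormedField 𝕜] [CompleteSpace 𝕜] {N : ℕ} [NeZero N]
    {a : ℕ → 𝕜} (ha : Function.Periodic a N) {x : 𝕜} (hx : ‖x‖ < 1) :
    HasSum (fun n ↦ a n * x ^ n) ((∑ n ∈ Finset.range N, a n * x ^ n) / (1 - x ^ N)) := by
  have hsum : Summable fun n ↦ a n * x ^ n := by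
    refine .of_norm_bounded ((summable_geometric_of_lt_one (norm_nonneg x) hx).mul_left
      (∑ n ∈ Finset.range N, ‖a n‖)) fun n ↦ ?_
    rw [norm_mul, norm_pow]
    gcongr
    exact norm_le_sum_range_of_periodic ha n
  have hx' : 1 - x ^ N ≠ 0 := by
    refine sub_ne_zero.mpr fun h ↦ (pow_lt_one₀ (norm_nonneg x) hx (NeZero.ne N)).ne ?_
    rw [← norm_pow, ← h, norm_one]
  have hshift : ∑' n, a (n + N) * x ^ (n + N) = x ^ N * ∑' n, a n * x ^ n := by
    rw [← tsum_mul_left]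
    exact tsum_congr fun n ↦ by rw [ha n]; ring
  have hsplit := hsum.sum_add_tsum_nat_add N
  rw [hshift] at hsplit
  rw [eq_sub_of_add_eq hsplit, ← one_sub_mul, mul_div_cancel_left₀ _ hx']
  exact hsum.hasSum

lemma setIntegral_Ioi_exp_neg_smul_comp {E : Type*} [NormedAddCommGroup E] [NormedSpace ℝ E]
    (f : ℝ → E) :
    ∫ t in Ioi (0 : ℝ), Real.exp (-t) • f (Real.exp (-t)) = ∫ x in (0 : ℝ)..1, f x := by
  have himage : Real.exp '' Iio 0 = Ioo 0 1 := by rw [Real.image_exp_Iio, Real.exp_zero]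
  rw [intervalIntegral.integral_of_le zero_le_one, integral_Ioc_eq_integral_Ioo, ← himage,
    integral_image_eq_integral_abs_deriv_smul measurableSet_Iio
      (fun t _ ↦ (Real.hasDerivAt_exp t).hasDerivWithinAt) Real.exp_injective.injOn,
    integral_comp_neg_Ioi (f := fun t ↦ Real.exp t • f (Real.exp t)), neg_zero,
    integral_Iic_eq_integral_Iio]
  simp only [Real.abs_exp]

lemma mellin_one {E : Type*} [NormedAddCommGroup E] [NormedSpace ℂ E] (f : ℝ → E) :
    mellin f 1 = ∫ t in Ioi 0, f t := by
  simp [mellin]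

variable {a : ℕ → ℂ} {f : ℝ → ℂ}

lemma mellin_exp_neg_smul_comp_eq {C : ℝ} (ha : ∀ n, ‖a n‖ ≤ C)
    (hf : ∀ x ∈ Ioo (0 : ℝ) 1, HasSum (fun n ↦ a (n + 1) * (x : ℂ) ^ n) (f x)) {s : ℂ}
    (hs : 1 < s.re) :
    mellin (fun t ↦ Real.exp (-t) • f (Real.exp (-t))) s = Gamma s * LSeries a s := by
  have hL : LSeriesSummable a s := LSeriesSummable_of_bounded_of_one_lt_re (fun n _ ↦ ha n) hs
  have hterm (n : ℕ) : LSeries.term a s (n + 1) = a (n + 1) / ((n + 1 : ℝ) : ℂ) ^ s := by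
    rw [LSeries.term_of_ne_zero n.succ_ne_zero]
    push_cast
    rfl
  have hL' := (summable_nat_add_iff 1).mpr hL
  have hmellin : HasSum (fun n : ℕ ↦ Gamma s * a (n + 1) / ((n + 1 : ℝ) : ℂ) ^ s)
      (mellin (fun t ↦ Real.exp (-t) • f (Real.exp (-t))) s) := by
    refine hasSum_mellin (fun n ↦ Or.inr n.cast_add_one_pos) (by linarith) (fun t ht ↦ ?_) ?_
    · have hx : Real.exp (-t) ∈ Ioo 0 1 :=
        ⟨Real.exp_pos _, Real.exp_lt_one_iff.mpr (neg_lt_zero.mpr ht)⟩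
      refine ((hf _ hx).const_smul (Real.exp (-t))).congr_fun fun n ↦ ?_
      rw [show -((n : ℝ) + 1) * t = -t + n * -t by ring, Real.exp_add, Real.exp_nat_mul]
      simp only [real_smul]
      push_cast
      ring
    · refine hL'.norm.congr fun n ↦ ?_
      rw [hterm, norm_div, norm_cpow_eq_rpow_re_of_pos n.cast_add_one_pos]
  refine hmellin.unique ?_
  have hL'' := ((hasSum_nat_add_iff' 1).mpr hL.hasSum).mul_left (Gamma s)
  simp only [Finset.sum_range_one, LSeries.term_zero, sub_zero] at hL''
  refine hL''.congr_fun fun n ↦ ?_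
  rw [hterm, mul_div_assoc]

lemma differentiableAt_mellin_exp_neg_smul_comp (hf : ContinuousOn f (Icc 0 1)) {s : ℂ}
    (hs : 0 < s.re) :
    DifferentiableAt ℂ (mellin fun t ↦ Real.exp (-t) • f (Real.exp (-t))) s := by
  have hmem {t : ℝ} (ht : 0 < t) : Real.exp (-t) ∈ Icc 0 1 :=
    ⟨(Real.exp_pos _).le, Real.exp_le_one_iff.mpr (neg_nonpos.mpr ht.le)⟩
  obtain ⟨C, hC⟩ := isCompact_Icc.exists_bound_of_continuousOn hf
  have hbound {t : ℝ} (ht : 0 < t) :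
      ‖Real.exp (-t) • f (Real.exp (-t))‖ ≤ C * ‖Real.exp (-1 * t)‖ := by
    rw [norm_smul, mul_comm, neg_one_mul]
    gcongr
    exact hC _ (hmem ht)
  refine mellin_differentiableAt_of_isBigO_rpow_exp one_pos ?_
    (.of_bound C <| (eventually_gt_atTop 0).mono fun t ht ↦ hbound ht) (b := 0) ?_ hs
  · have hexp : Continuous fun t : ℝ ↦ Real.exp (-t) := by fun_prop
    exact (hexp.continuousOn.smul (hf.comp hexp.continuousOn fun t ht ↦ hmem ht)
      ).locallyIntegrableOn measurableSet_Ioi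
  · refine .of_bound C <| eventually_mem_nhdsWithin.mono fun t (ht : 0 < t) ↦ ?_
    have hC0 : 0 ≤ C := (norm_nonneg _).trans (hC 0 (by simp))
    refine (hbound ht).trans (mul_le_mul_of_nonneg_left ?_ hC0)
    rw [neg_zero, Real.rpow_zero, norm_one, neg_one_mul, Real.norm_of_nonneg (hmem ht).1]
    exact (hmem ht).2

theorem tendsto_LSeries_of_hasSum {C : ℝ} (ha : ∀ n, ‖a n‖ ≤ C) (hfc : ContinuousOn f (Icc 0 1))
    (hf : ∀ x ∈ Ioo (0 : ℝ) 1, HasSum (fun n ↦ a (n + 1) * (x : ℂ) ^ n) (f x)) :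
    Tendsto (LSeries a) (𝓝[{s | 1 < s.re}] 1) (𝓝 (∫ x in (0 : ℝ)..1, f x)) := by
  have hmellin : ContinuousAt (mellin fun t ↦ Real.exp (-t) • f (Real.exp (-t))) 1 :=
    (differentiableAt_mellin_exp_neg_smul_comp hfc (by simp)).continuousAt
  have hGamma : ContinuousAt Gamma 1 :=
    differentiableAt_Gamma_one.continuousAt
  have hlim := (hmellin.tendsto.div hGamma.tendsto (by simp)).mono_left
    (nhdsWithin_le_nhds (s := {s : ℂ | 1 < s.re}))
  rw [mellin_one, setIntegral_Ioi_exp_neg_smul_comp, Gamma_one, div_one] at hlim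
  refine hlim.congr' (eventually_mem_nhdsWithin.mono fun s (hs : 1 < s.re) ↦ ?_)
  rw [Pi.div_apply, mellin_exp_neg_smul_comp_eq ha hf hs,
    mul_div_cancel_left₀ _ (Gamma_ne_zero_of_re_pos (by linarith))]

theorem tendsto_LSeries_of_periodic {N : ℕ} [NeZero N] (ha : Function.Periodic a N)
    (hfc : ContinuousOn f (Icc 0 1))
    (hf : ∀ x ∈ Ioo (0 : ℝ) 1,
      ∑ n ∈ Finset.range N, a (n + 1) * (x : ℂ) ^ n = f x * (1 - (x : ℂ) ^ N)) :
    Tendsto (LSeries a) (𝓝[{s | 1 < s.re}] 1) (𝓝 (∫ x in (0 : ℝ)..1, f x)) := by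
  refine tendsto_LSeries_of_hasSum (norm_le_sum_range_of_periodic ha) hfc fun x hx ↦ ?_
  have hx1 : ‖(x : ℂ)‖ < 1 := by simpa [abs_of_pos hx.1] using hx.2
  have hxN : 1 - (x : ℂ) ^ N ≠ 0 :=
    sub_ne_zero.mpr (by exact_mod_cast (pow_lt_one₀ hx.1.le hx.2 (NeZero.ne N)).ne')
  have ha' : Function.Periodic (fun n ↦ a (n + 1)) N := fun n ↦ by
    simp only [add_right_comm n N 1, ha (n + 1)]
  simpa only [hf x hx, mul_div_cancel_right₀ _ hxN] using hasSum_periodic_mul_pow ha' hx1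

end AbelianTheorem

section SpecialValues

lemma hasDerivAt_log_antideriv_one_sub_sq_div_one_add_pow_four (x : ℝ) :
    HasDerivAt (fun x : ℝ ↦ (Real.log (x ^ 2 + √2 * x + 1) -
      Real.log (x ^ 2 - √2 * x + 1)) / (2 * √2)) ((1 - x ^ 2) / (1 + x ^ 4)) x := by
  have h2 : √2 ^ 2 = 2 := Real.sq_sqrt zero_le_two
  have hp0 : 0 < x ^ 2 + √2 * x + 1 := by nlinarith [sq_nonneg (2 * x + √2)]
  have hm0 : 0 < x ^ 2 - √2 * x + 1 := by nlinarith [sq_nonneg (2 * x - √2)]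
  have hp : HasDerivAt (fun x : ℝ ↦ x ^ 2 + √2 * x + 1) (2 * x + √2) x := by
    simpa using ((hasDerivAt_pow 2 x).add ((hasDerivAt_id x).const_mul √2)).add_const 1
  have hm : HasDerivAt (fun x : ℝ ↦ x ^ 2 - √2 * x + 1) (2 * x - √2) x := by
    simpa using ((hasDerivAt_pow 2 x).sub ((hasDerivAt_id x).const_mul √2)).add_const 1
  have hfactor : 1 + x ^ 4 = (x ^ 2 + √2 * x + 1) * (x ^ 2 - √2 * x + 1) := by
    linear_combination x ^ 2 * h2
  refine (((hp.log hp0.ne').sub (hm.log hm0.ne')).div_const (2 * √2)).congr_deriv ?_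
  rw [hfactor, div_sub_div _ _ hp0.ne' hm0.ne', div_div, div_eq_div_iff (by positivity)
    (by positivity)]
  ring

lemma integral_one_sub_sq_div_one_add_pow_four :
    ∫ x in (0 : ℝ)..1, (1 - x ^ 2) / (1 + x ^ 4) = Real.log (1 + √2) / √2 := by
  have hint : IntervalIntegrable (fun x : ℝ ↦ (1 - x ^ 2) / (1 + x ^ 4)) volume 0 1 :=
    (Continuous.div (by fun_prop) (by fun_prop) fun x ↦ by positivity).intervalIntegrable _ _
  rw [intervalIntegral.integral_eq_sub_of_hasDerivAt
    (fun x _ ↦ hasDerivAt_log_antideriv_one_sub_sq_div_one_add_pow_four x) hint]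
  have hlt : √2 < 2 := by rw [Real.sqrt_lt' two_pos]; norm_num
  have hpos : 0 < 1 ^ 2 - √2 * 1 + 1 := by linarith
  have hquot : 1 ^ 2 + √2 * 1 + 1 = (1 + √2) ^ 2 * (1 ^ 2 - √2 * 1 + 1) := by
    linear_combination √2 * Real.sq_sqrt zero_le_two
  rw [hquot, Real.log_mul (by positivity) hpos.ne', Real.log_pow]
  simp only [Nat.cast_ofNat, one_pow, mul_one, add_sub_cancel_right, ne_eq, OfNat.ofNat_ne_zero,
    not_false_eq_true, zero_pow, mul_zero, add_zero, zero_add, Real.log_one, sub_self, zero_div,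
    sub_zero]
  field_simp

lemma hasDerivAt_arctan_antideriv_one_add_sq_div_one_add_pow_four (x : ℝ) :
    HasDerivAt (fun x : ℝ ↦ (Real.arctan (√2 * x + 1) + Real.arctan (√2 * x - 1)) / √2)
      ((1 + x ^ 2) / (1 + x ^ 4)) x := by
  have h2 : √2 ^ 2 = 2 := Real.sq_sqrt zero_le_two
  have hlin : HasDerivAt (fun x : ℝ ↦ √2 * x) √2 x := by
    simpa using (hasDerivAt_id x).const_mul √2
  have hfactor : (1 + (√2 * x + 1) ^ 2) * (1 + (√2 * x - 1) ^ 2) = 4 * (1 + x ^ 4) := by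
    linear_combination x ^ 4 * (√2 ^ 2 + 2) * h2
  have hsum : 1 / (1 + (√2 * x + 1) ^ 2) + 1 / (1 + (√2 * x - 1) ^ 2) =
      (1 + x ^ 2) / (1 + x ^ 4) := by
    rw [div_add_div _ _ (by positivity) (by positivity), hfactor,
      div_eq_div_iff (by positivity) (by positivity)]
    linear_combination 2 * x ^ 2 * (1 + x ^ 4) * h2
  refine (((hlin.add_const 1).arctan.add (hlin.sub_const 1).arctan).div_const √2).congr_deriv ?_
  rw [← add_mul, hsum, mul_div_cancel_right₀ _ (by positivity)]

lemma integral_one_add_sq_div_one_add_pow_four :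
    ∫ x in (0 : ℝ)..1, (1 + x ^ 2) / (1 + x ^ 4) = Real.pi / (2 * √2) := by
  have hint : IntervalIntegrable (fun x : ℝ ↦ (1 + x ^ 2) / (1 + x ^ 4)) volume 0 1 :=
    (Continuous.div (by fun_prop) (by fun_prop) fun x ↦ by positivity).intervalIntegrable _ _
  rw [intervalIntegral.integral_eq_sub_of_hasDerivAt
    (fun x _ ↦ hasDerivAt_arctan_antideriv_one_add_sq_div_one_add_pow_four x) hint]
  have hinv : √2 * 1 - 1 = (√2 * 1 + 1)⁻¹ := by
    rw [← mul_eq_one_iff_eq_inv₀ (by positivity)]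
    linear_combination Real.sq_sqrt zero_le_two
  rw [hinv, Real.arctan_inv_of_pos (by positivity)]
  simp only [mul_one, add_sub_cancel, mul_zero, zero_add, Real.arctan_one, zero_sub,
    Real.arctan_neg, add_neg_cancel, zero_div, sub_zero]
  field_simp

/-- The Dirichlet series `∑ χ(n) n⁻ˢ` of an integer-valued character modulo `N`. -/
noncomputable def charLSeries {N : ℕ} (χ : MulChar (ZMod N) ℤ) : ℂ → ℂ :=
  LSeries fun n ↦ (χ n : ℂ)

lemma tendsto_charLSeries {N : ℕ} [NeZero N] (χ : MulChar (ZMod N) ℤ) {f : ℝ → ℝ}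
    (hfc : ContinuousOn f (Icc 0 1))
    (hf : ∀ x ∈ Ioo (0 : ℝ) 1,
      ∑ n ∈ Finset.range N, (χ (n + 1 : ℕ) : ℝ) * x ^ n = f x * (1 - x ^ N)) :
    Tendsto (charLSeries χ) (𝓝[{s | 1 < s.re}] 1)
      (𝓝 (∫ x in (0 : ℝ)..1, f x : ℝ)) := by
  rw [← intervalIntegral.integral_ofReal]
  refine tendsto_LSeries_of_periodic (N := N) (fun n ↦ by simp)
    (continuous_ofReal.comp_continuousOn hfc) fun x hx ↦ ?_
  exact_mod_cast congrArg ofReal (hf x hx)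

lemma tendsto_charLSeries_χ₄ :
    Tendsto (charLSeries ZMod.χ₄) (𝓝[{s | 1 < s.re}] 1) (𝓝 (Real.pi / 4 : ℝ)) := by
  have hint : ∫ x in (0 : ℝ)..1, (1 + x ^ 2)⁻¹ = Real.pi / 4 := by simp
  rw [← hint]
  refine tendsto_charLSeries _
    (Continuous.inv₀ (by fun_prop) fun x ↦ by positivity).continuousOn fun x _ ↦ ?_
  have hx : 1 + x ^ 2 ≠ 0 := by positivity
  have hsum : ∑ n ∈ Finset.range 4, (ZMod.χ₄ (n + 1 : ℕ) : ℝ) * x ^ n = 1 - x ^ 2 := by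
    simp only [Finset.sum_range_succ, Finset.sum_range_zero, ZMod.χ₄_nat_eq_if_mod_four]
    norm_num
    ring
  rw [hsum]
  field_simp
  ring

lemma tendsto_charLSeries_χ₈ :
    Tendsto (charLSeries ZMod.χ₈) (𝓝[{s | 1 < s.re}] 1)
      (𝓝 (Real.log (1 + √2) / √2 : ℝ)) := by
  rw [← integral_one_sub_sq_div_one_add_pow_four]
  refine tendsto_charLSeries _
    (Continuous.div (by fun_prop) (by fun_prop) fun x ↦ by positivity).continuousOn fun x _ ↦ ?_
  have hx : 1 + x ^ 4 ≠ 0 := by positivity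
  have hsum : ∑ n ∈ Finset.range 8, (ZMod.χ₈ (n + 1 : ℕ) : ℝ) * x ^ n =
      1 - x ^ 2 - x ^ 4 + x ^ 6 := by
    simp only [Finset.sum_range_succ, Finset.sum_range_zero, ZMod.χ₈_nat_eq_if_mod_eight]
    norm_num
    ring
  rw [hsum]
  field_simp
  ring

lemma tendsto_charLSeries_χ₈' :
    Tendsto (charLSeries ZMod.χ₈') (𝓝[{s | 1 < s.re}] 1)
      (𝓝 (Real.pi / (2 * √2) : ℝ)) := by
  rw [← integral_one_add_sq_div_one_add_pow_four]
  refine tendsto_charLSeries _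
    (Continuous.div (by fun_prop) (by fun_prop) fun x ↦ by positivity).continuousOn fun x _ ↦ ?_
  have hx : 1 + x ^ 4 ≠ 0 := by positivity
  have hsum : ∑ n ∈ Finset.range 8, (ZMod.χ₈' (n + 1 : ℕ) : ℝ) * x ^ n =
      1 + x ^ 2 - x ^ 4 - x ^ 6 := by
    simp only [Finset.sum_range_succ, Finset.sum_range_zero, ZMod.χ₈'_nat_eq_if_mod_eight]
    norm_num
    ring
  rw [hsum]
  field_simp
  ring

end SpecialValues

section PartialEulerProduct

/-- The part `∏ (1 - p⁻ˢ)⁻¹` of the Euler product of the Riemann zeta function that belongs to a set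
`S` of primes. -/
noncomputable def partialZeta (S : Set ℕ) (s : ℂ) : ℂ :=
  ∏' p : S, (1 - (p : ℂ) ^ (-s))⁻¹

lemma summable_norm_cpow_neg (S : Set ℕ) {s : ℂ} (hs : 1 < s.re) :
    Summable fun p : S ↦ ‖(p : ℂ) ^ (-s)‖ := by
  have hsum : Summable fun n : ℕ ↦ ‖(n : ℂ) ^ (-s)‖ := by
    simpa only [cpow_neg, one_div] using (summable_one_div_nat_cpow.mpr hs).norm
  exact hsum.subtype S

variable {S : Set ℕ} {s : ℂ}

lemma one_sub_cpow_neg_ne_zero {p : ℕ} (hp : 1 < p) (hs : 0 < s.re) : 1 - (p : ℂ) ^ (-s) ≠ 0 := by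
  refine sub_ne_zero.mpr fun h ↦ ?_
  have hlt := Real.rpow_lt_one_of_one_lt_of_neg (Nat.one_lt_cast.mpr hp) (neg_lt_zero.mpr hs)
  rw [← neg_re, ← norm_natCast_cpow_of_pos (by lia), ← h, norm_one] at hlt
  exact hlt.false

lemma tprod_one_sub_cpow_neg_ne_zero (hS : ∀ p ∈ S, 1 < p) (hs : 1 < s.re) :
    ∏' p : S, (1 - (p : ℂ) ^ (-s)) ≠ 0 := by
  simp_rw [sub_eq_add_neg]
  refine tprod_one_add_ne_zero_of_summable (fun p ↦ ?_) ?_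
  · rw [← sub_eq_add_neg]
    exact one_sub_cpow_neg_ne_zero (hS p p.2) (by linarith)
  · simpa only [norm_neg] using summable_norm_cpow_neg S hs

lemma hasProd_inv_tprod_one_sub_cpow_neg (hS : ∀ p ∈ S, 1 < p) (hs : 1 < s.re) :
    HasProd (fun p : S ↦ (1 - (p : ℂ) ^ (-s))⁻¹) (∏' p : S, (1 - (p : ℂ) ^ (-s)))⁻¹ := by
  refine HasProd.inv₀ (Multipliable.hasProd ?_) (tprod_one_sub_cpow_neg_ne_zero hS hs)
  simp_rw [sub_eq_add_neg]
  exact multipliable_one_add_of_summable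
    (by simpa only [norm_neg] using summable_norm_cpow_neg S hs)

lemma partialZeta_eq_inv (hS : ∀ p ∈ S, 1 < p) (hs : 1 < s.re) :
    partialZeta S s = (∏' p : S, (1 - (p : ℂ) ^ (-s)))⁻¹ :=
  (hasProd_inv_tprod_one_sub_cpow_neg hS hs).tprod_eq

lemma hasProd_partialZeta (hS : ∀ p ∈ S, 1 < p) (hs : 1 < s.re) :
    HasProd (fun p : S ↦ (1 - (p : ℂ) ^ (-s))⁻¹) (partialZeta S s) :=
  (hasProd_inv_tprod_one_sub_cpow_neg hS hs).multipliable.hasProd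

lemma tprod_pow_eq_partialZeta_pow (hS : ∀ p ∈ S, 1 < p) (hs : 1 < s.re) (k : ℕ) :
    ∏' p : S, ((1 - (p : ℂ) ^ (-s))⁻¹) ^ k = partialZeta S s ^ k :=
  ((hasProd_partialZeta hS hs).pow k).tprod_eq

lemma hasProd_primes_partialZeta (hS : ∀ p ∈ S, p.Prime) (hs : 1 < s.re) [DecidablePred (· ∈ S)] :
    HasProd (fun p : Nat.Primes ↦ if (p : ℕ) ∈ S then (1 - (p : ℂ) ^ (-s))⁻¹ else 1)
      (partialZeta S s) := by
  let ι (p : S) : Nat.Primes := ⟨p, hS p p.2⟩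
  have hι : ι.Injective := fun p q h ↦ Subtype.ext (congrArg ((↑) : Nat.Primes → ℕ) h)
  refine (hι.hasProd_iff fun p hp ↦ if_neg fun hpS ↦ hp ⟨⟨p, hpS⟩, rfl⟩).mp ?_
  exact (hasProd_partialZeta (fun p hp ↦ (hS p hp).one_lt) hs).congr_fun fun p ↦ if_pos p.2

lemma continuousAt_partialZeta (hS : ∀ p ∈ S, 1 < p) (hs : 1 < s.re) :
    ContinuousAt (partialZeta S) s := by
  obtain ⟨σ, hσ1, hσs⟩ := exists_between hs
  have hnear : ∀ᶠ z : ℂ in 𝓝 s, σ < z.re := continuous_re.continuousAt.eventually_const_lt hσs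
  have hprod : ContinuousAt (fun z ↦ ∏' p : S, (1 - (p : ℂ) ^ (-z))) s := by
    simp_rw [sub_eq_add_neg]
    refine tendsto_tprod_one_add_of_dominated_convergence
      (summable_norm_cpow_neg S (s := σ) (by simpa using hσ1)) (fun p ↦ ?_)
      (hnear.mono fun z hz p ↦ ?_)
    · have hp : (p : ℂ) ≠ 0 := by exact_mod_cast (by have := hS p p.2; lia : (p : ℕ) ≠ 0)
      exact (continuousAt_const_cpow hp).comp continuousAt_neg |>.neg
    · have hp := hS p p.2
      rw [norm_neg, norm_natCast_cpow_of_pos (by lia), norm_natCast_cpow_of_pos (by lia)]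
      refine Real.rpow_le_rpow_of_exponent_le (by exact_mod_cast hp.le) ?_
      simpa using hz.le
  refine (hprod.inv₀ (tprod_one_sub_cpow_neg_ne_zero hS hs)).congr (hnear.mono fun z hz ↦ ?_)
  exact (partialZeta_eq_inv hS (hσ1.trans hz)).symm

end PartialEulerProduct

section Comparison

lemma hasProd_charLSeries {N : ℕ} (χ : MulChar (ZMod N) ℤ) {s : ℂ} (hs : 1 < s.re) :
    HasProd (fun p : Nat.Primes ↦ (1 - (χ (p : ℕ) : ℂ) * (p : ℂ) ^ (-s))⁻¹)
      (charLSeries χ s) :=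
  DirichletCharacter.LSeries_eulerProduct_hasProd (χ.ringHomComp (Int.castRingHom ℂ)) hs

lemma one_mulChar_zmod_eight_natCast (n : ℕ) :
    (1 : MulChar (ZMod 8) ℤ) n = if n % 2 = 0 then 0 else 1 := by
  have hunit : IsUnit (n : ZMod 8) ↔ n % 2 ≠ 0 := by
    rw [ZMod.isUnit_iff_coprime, show 8 = 2 ^ 3 by norm_num,
      Nat.coprime_pow_right_iff three_pos, Nat.coprime_two_right, Nat.odd_iff, Nat.mod_two_ne_zero]
  split_ifs with h
  · exact MulChar.map_nonunit _ (by simpa [hunit] using h)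
  · exact MulChar.one_apply (hunit.mpr h)

lemma euler_factor_mod_eight {K : Type*} [Field K] (n : ℕ) (T : K) :
    (1 - ((1 : MulChar (ZMod 8) ℤ) n : K) * T)⁻¹ * (1 - (ZMod.χ₄ n : K) * T)⁻¹ *
        (1 - (ZMod.χ₈ n : K) * T)⁻¹ * (1 - (ZMod.χ₈' n : K) * T)⁻¹ *
        (if n % 8 = 1 then (1 - T ^ 2)⁻¹ else 1) ^ 2 =
      (if n % 8 = 1 then (1 - T)⁻¹ else 1) ^ 4 *
        (1 - ((1 : MulChar (ZMod 8) ℤ) n : K) * T ^ 2)⁻¹ ^ 2 := by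
  have hfactor : (1 - T ^ 2)⁻¹ = (1 - T)⁻¹ * (1 + T)⁻¹ := by rw [← mul_inv]; ring
  rw [one_mulChar_zmod_eight_natCast, ZMod.χ₄_nat_eq_if_mod_four, ZMod.χ₈_nat_eq_if_mod_eight,
    ZMod.χ₈'_nat_eq_if_mod_eight]
  have hmod : n % 2 = 0 ∨ n % 8 = 1 ∨ n % 8 = 3 ∨ n % 8 = 5 ∨ n % 8 = 7 := by lia
  rcases hmod with h | hodd
  · simp [h, show n % 8 ≠ 1 by lia]
  have h2 : n % 2 = 1 := by lia
  have h4 : n % 4 = n % 8 % 4 := by lia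
  rcases hodd with h | h | h | h
  all_goals
    simp only [h, h2, h4, hfactor, Nat.reduceMod, Nat.reduceEqDiff, OfNat.ofNat_ne_one,
      OfNat.one_ne_ofNat, one_ne_zero, or_true, or_false, ↓reduceIte, Int.cast_one, Int.cast_neg,
      one_mul]
    ring

lemma one_lt_two_mul_re {s : ℂ} (hs : 1 < s.re) : 1 < (2 * s).re := by
  simp only [mul_re, re_ofNat, im_ofNat, zero_mul, sub_zero]
  linarith

lemma charLSeries_mul_partialZeta {s : ℂ} (hs : 1 < s.re) :
    charLSeries (1 : MulChar (ZMod 8) ℤ) s * charLSeries ZMod.χ₄ s * charLSeries ZMod.χ₈ s *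
        charLSeries ZMod.χ₈' s * partialZeta {p | p.Prime ∧ p % 8 = 1} (2 * s) ^ 2 =
      partialZeta {p | p.Prime ∧ p % 8 = 1} s ^ 4 *
        charLSeries (1 : MulChar (ZMod 8) ℤ) (2 * s) ^ 2 := by
  have hs2 : 1 < (2 * s).re := one_lt_two_mul_re hs
  have hprime : ∀ p ∈ {p : ℕ | p.Prime ∧ p % 8 = 1}, p.Prime := fun p hp ↦ hp.1
  have hleft := ((((hasProd_charLSeries (1 : MulChar (ZMod 8) ℤ) hs).mul
    (hasProd_charLSeries ZMod.χ₄ hs)).mul (hasProd_charLSeries ZMod.χ₈ hs)).mul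
    (hasProd_charLSeries ZMod.χ₈' hs)).mul ((hasProd_primes_partialZeta hprime hs2).pow 2)
  have hright := ((hasProd_primes_partialZeta hprime hs).pow 4).mul
    ((hasProd_charLSeries (1 : MulChar (ZMod 8) ℤ) hs2).pow 2)
  refine hleft.unique (hright.congr_fun fun p ↦ ?_)
  have hsq : (p : ℂ) ^ (-(2 * s)) = ((p : ℂ) ^ (-s)) ^ 2 := by
    rw [← cpow_nat_mul]
    push_cast
    ring_nf
  simp only [Set.mem_ofPred_eq, p.2, true_and, hsq]
  exact euler_factor_mod_eight p ((p : ℂ) ^ (-s))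

lemma charLSeries_one_eq_LFunctionTrivChar {N : ℕ} [NeZero N] {s : ℂ} (hs : 1 < s.re) :
    charLSeries (1 : MulChar (ZMod N) ℤ) s = DirichletCharacter.LFunctionTrivChar N s := by
  have h1 : (1 : MulChar (ZMod N) ℤ).ringHomComp (Int.castRingHom ℂ) = 1 :=
    MulChar.ringHomComp_one _
  rw [DirichletCharacter.LFunctionTrivChar, DirichletCharacter.LFunction_eq_LSeries _ hs, ← h1]
  rfl

lemma primeFactors_eight : Nat.primeFactors 8 = {2} := by
  rw [show 8 = 2 ^ 3 by norm_num, Nat.primeFactors_prime_pow three_ne_zero Nat.prime_two]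

lemma LFunctionTrivChar_eight_two : DirichletCharacter.LFunctionTrivChar 8 2 = Real.pi ^ 2 / 8 := by
  rw [DirichletCharacter.LFunctionTrivChar_eq_mul_riemannZeta (by norm_num), riemannZeta_two,
    primeFactors_eight, Finset.prod_singleton]
  norm_num [cpow_neg]
  ring

lemma tendsto_sub_mul_charLSeries_one {N : ℕ} [NeZero N] :
    Tendsto (fun s ↦ (s - 1) * charLSeries (1 : MulChar (ZMod N) ℤ) s) (𝓝[{s | 1 < s.re}] 1)
      (𝓝 (∏ p ∈ N.primeFactors, (1 - (p : ℂ)⁻¹))) := by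
  have hne : {s : ℂ | 1 < s.re} ⊆ {1}ᶜ := by
    rintro s hs rfl
    simp at hs
  refine (DirichletCharacter.LFunctionTrivChar_residue_one.mono_left
    (nhdsWithin_mono _ hne)).congr' (eventually_mem_nhdsWithin.mono fun s hs ↦ ?_)
  simp only [charLSeries_one_eq_LFunctionTrivChar hs]

lemma tendsto_charLSeries_one_two_mul :
    Tendsto (fun s ↦ charLSeries (1 : MulChar (ZMod 8) ℤ) (2 * s)) (𝓝[{s | 1 < s.re}] 1)
      (𝓝 (Real.pi ^ 2 / 8)) := by
  have hcont : ContinuousAt (DirichletCharacter.LFunctionTrivChar 8) 2 :=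
    (DirichletCharacter.differentiableAt_LFunction _ _ (.inl (by norm_num))).continuousAt
  have hlim : Tendsto (fun s : ℂ ↦ 2 * s) (𝓝 1) (𝓝 2) :=
    Continuous.tendsto' (by fun_prop) _ _ (mul_one 2)
  rw [← LFunctionTrivChar_eight_two]
  refine ((hcont.tendsto.comp hlim).mono_left nhdsWithin_le_nhds).congr'
    (eventually_mem_nhdsWithin.mono fun s (hs : 1 < s.re) ↦ ?_)
  exact (charLSeries_one_eq_LFunctionTrivChar (one_lt_two_mul_re hs)).symm

lemma tendsto_partialZeta_two_mul {S : Set ℕ} (hS : ∀ p ∈ S, 1 < p) :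
    Tendsto (fun s ↦ partialZeta S (2 * s)) (𝓝[{s | 1 < s.re}] 1) (𝓝 (partialZeta S 2)) := by
  have hlim : Tendsto (fun s : ℂ ↦ 2 * s) (𝓝 1) (𝓝 2) :=
    Continuous.tendsto' (by fun_prop) _ _ (mul_one 2)
  exact ((continuousAt_partialZeta hS (by simp)).tendsto.comp hlim).mono_left nhdsWithin_le_nhds

lemma tendsto_sub_mul_partialZeta_pow :
    Tendsto (fun s : ℂ ↦ (s - 1) * partialZeta {p | p.Prime ∧ p % 8 = 1} s ^ 4)
      (𝓝[{s | 1 < s.re}] 1)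
      (𝓝 (2 * Real.log (1 + √2) / Real.pi ^ 2 * partialZeta {p | p.Prime ∧ p % 8 = 1} 2 ^ 2)) := by
  set Z := partialZeta {p | p.Prime ∧ p % 8 = 1}
  have hZ : Tendsto (fun s ↦ Z (2 * s)) (𝓝[{s | 1 < s.re}] 1) (𝓝 (Z 2)) :=
    tendsto_partialZeta_two_mul fun p hp ↦ hp.1.one_lt
  have hL0 : (Real.pi : ℂ) ^ 2 / 8 ≠ 0 := by simp [Real.pi_ne_zero]
  have hlim := ((((tendsto_sub_mul_charLSeries_one (N := 8)).mul tendsto_charLSeries_χ₄).mul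
    tendsto_charLSeries_χ₈).mul tendsto_charLSeries_χ₈').mul (hZ.pow 2) |>.div
    (tendsto_charLSeries_one_two_mul.pow 2) (pow_ne_zero 2 hL0)
  have hvalue : (1 - (2 : ℂ)⁻¹) * (Real.pi / 4 : ℝ) * (Real.log (1 + √2) / √2 : ℝ) *
      (Real.pi / (2 * √2) : ℝ) / (Real.pi ^ 2 / 8) ^ 2 =
      2 * Real.log (1 + √2) / Real.pi ^ 2 := by
    have hsqrt : (√2 : ℂ) ^ 2 = 2 := by exact_mod_cast Real.sq_sqrt zero_le_two
    have hsqrt0 : (√2 : ℂ) ≠ 0 := by exact_mod_cast (Real.sqrt_pos.mpr two_pos).ne'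
    have hpi : (Real.pi : ℂ) ≠ 0 := by exact_mod_cast Real.pi_ne_zero
    push_cast
    field_simp
    rw [hsqrt]
    ring
  rw [primeFactors_eight, Finset.prod_singleton, Nat.cast_ofNat, mul_div_right_comm, hvalue] at hlim
  refine hlim.congr' ?_
  filter_upwards [eventually_mem_nhdsWithin,
    tendsto_charLSeries_one_two_mul.eventually_ne hL0] with s hs hne
  rw [Pi.div_apply, div_eq_iff (pow_ne_zero 2 hne)]
  linear_combination (s - 1) * charLSeries_mul_partialZeta hs

end Comparison

theorem euler_product_residue_mod8_one_general :
    Tendsto (fun s : ℂ ↦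
        (s - 1) * ∏' p : {p : ℕ // p.Prime ∧ p % 8 = 1}, ((1 - (p : ℂ) ^ (-s))⁻¹) ^ 4)
      (𝓝[{s | 1 < s.re}] 1)
      (𝓝 ((2 * Real.log (1 + √2) / Real.pi ^ 2) *
        ∏' p : {p : ℕ // p.Prime ∧ p % 8 = 1}, ((1 - ((p : ℂ) ^ 2)⁻¹)⁻¹) ^ 2)) := by
  have hS : ∀ p ∈ {p : ℕ | p.Prime ∧ p % 8 = 1}, 1 < p := fun p hp ↦ hp.1.one_lt
  have hlimit := tprod_pow_eq_partialZeta_pow hS (s := 2) (by simp) 2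
  simp only [cpow_neg, cpow_ofNat] at hlimit
  have hlim := tendsto_sub_mul_partialZeta_pow
  rw [← hlimit] at hlim
  refine hlim.congr' ?_
  filter_upwards [eventually_mem_nhdsWithin] with s hs
  rw [← tprod_pow_eq_partialZeta_pow hS hs 4]
  rfl

lemma ofReal_tprod {ι : Type*} (f : ι → ℝ) : ((∏' i, f i : ℝ) : ℂ) = ∏' i, (f i : ℂ) :=
  Function.LeftInverse.map_tprod f (g := ofRealHom) continuous_ofReal continuous_re ofReal_re

lemma tendsto_ofReal_nhdsGT_one : Tendsto ofReal (𝓝[>] 1) (𝓝[{s | 1 < s.re}] 1) :=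
  tendsto_nhdsWithin_of_tendsto_nhds_of_eventually_within _
    continuous_ofReal.continuousWithinAt.tendsto eventually_mem_nhdsWithin

theorem euler_product_residue_mod8_one :
    Filter.Tendsto
      (fun s : ℝ =>
        (s - 1) * ∏' p : {p : ℕ // p.Prime ∧ p % 8 = 1}, ((1 - (p : ℝ) ^ (-s))⁻¹) ^ 4)
      (nhdsWithin 1 (Set.Ioi 1))
      (nhds ((2 * Real.log (1 + Real.sqrt 2) / Real.pi ^ 2) *
        ∏' p : {p : ℕ // p.Prime ∧ p % 8 = 1}, ((1 - ((p : ℝ) ^ 2)⁻¹)⁻¹) ^ 2)) := by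
  rw [← tendsto_ofReal_iff]
  simpa [ofReal_tprod, ofReal_cpow, Function.comp_def] using
    euler_product_residue_mod8_one_general.comp tendsto_ofReal_nhdsGT_one
end
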